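/- For all odd integers n ≥ 1, writing m = (n−1)/2, one has C_{3,3}(n) = (1/n) · ∑_{j=0}^{⌊m/13⌋} ∑_{i=0}^{⌊(m−13j)/4⌋} multinomial(3(m − i − 4j); n−1, m − 4i − 13j, i, j) · (−1)^i · 3^{m − 3i − 13j}, where multinomial(M; a,b,c,e) = M!/(a!·b!·c!·e!) for M = a+b+c+e. -/

import Mathlib

/-! Put `q = p - 1`. The equation reads `y * (1 - u(y)) = x` with
`u = 3 X^q - 3 X^(p^2 - 1) + X^(p^3 - 1)`, so Lagrange inversion gives
`n [x^n] y = [X^(n - 1)] (1 - u)^(-n)`. The right-hand side is expanded by the binomial series for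
`(1 - u)^(-n)` and the multinomial theorem for the powers of `u`. The three exponents of `u` are
`q`, `q (p + 1)` and `q (p^2 + p + 1)`; for `n = q m + 1` the multiplicities `a, i, j` of the three
terms therefore run over the solutions of `a + (p + 1) i + (p^2 + p + 1) j = m`, and the pair
`(i, j)` determines `a`. -/

open Finset PowerSeries

section LagrangeInversion

variable {R : Type*} [CommRing R] {φ ψ : R⟦X⟧}

theorem subst_eq_sum_add_pow_mul {a : R⟦X⟧} (ha : HasSubst a) (f : R⟦X⟧) (n : ℕ) :
    f.subst a = ∑ k ∈ range n, C (coeff k f) * a ^ k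
      + a ^ n * (PowerSeries.mk fun k ↦ coeff (k + n) f).subst a := by
  conv_lhs => rw [eq_X_pow_mul_shift_add_trunc n f, subst_add ha, subst_mul ha, subst_pow ha,
    subst_X ha, subst_coe ha, add_comm]
  congr 1
  rcases n with _ | n
  · simp
  rw [Polynomial.aeval_eq_sum_range' (natDegree_trunc_lt f n)]
  refine sum_congr rfl fun k hk ↦ ?_
  rw [coeff_trunc, if_pos (mem_range.1 hk), smul_eq_C_mul]

theorem derivative_mul_sq_of_mul_eq_one (hφψ : φ * ψ = 1) :
    d⁄dX R ψ * φ ^ 2 = -d⁄dX R φ := by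
  have leibniz := congrArg (d⁄dX R) hφψ
  rw [Derivation.leibniz, smul_eq_mul, smul_eq_mul, derivative_one] at leibniz
  linear_combination φ * leibniz - d⁄dX R φ * hφψ

/- This is the residue of `d(Xψ) / (Xψ)^(n + 1)`: the form is exact unless `n = 0`, when it is
`dX / X` plus a form without pole. -/
theorem coeff_derivative_X_mul_mul_pow [IsAddTorsionFree R] (hφψ : φ * ψ = 1) (n : ℕ) :
    coeff n (d⁄dX R (X * ψ) * φ ^ (n + 1)) = if n = 0 then 1 else 0 := by
  have expand (r : ℕ) : d⁄dX R (X * ψ) * φ ^ (r + 1)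
      = φ ^ r + X * (d⁄dX R ψ * φ ^ (r + 1)) := by
    rw [Derivation.leibniz, derivative_X, smul_eq_mul, smul_eq_mul]
    linear_combination φ ^ r * hφψ
  rcases n with _ | n
  · rw [expand]
    simp
  have exact_form : (n + 1) • (d⁄dX R ψ * φ ^ (n + 2)) = -d⁄dX R (φ ^ (n + 1)) := by
    rw [derivative_pow, nsmul_eq_mul, Nat.add_sub_cancel]
    linear_combination ((n + 1 : ℕ) : R⟦X⟧) * φ ^ n * derivative_mul_sq_of_mul_eq_one hφψ
  have coeff_exact := congrArg (coeff n) exact_form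
  rw [map_nsmul, map_neg, coeff_derivative] at coeff_exact
  rw [if_neg n.succ_ne_zero, ← nsmul_eq_zero_iff_right n.succ_ne_zero, expand, map_add,
    coeff_succ_X_mul, nsmul_add, coeff_exact, nsmul_eq_mul]
  push_cast
  ring

theorem coeff_subst_mul_derivative_mul_pow [IsAddTorsionFree R] (hφψ : φ * ψ = 1) (f : R⟦X⟧)
    (n : ℕ) :
    coeff n (f.subst (X * ψ) * (d⁄dX R (X * ψ) * φ ^ (n + 1))) = coeff n f := by
  have hsubst : HasSubst (X * ψ) := .of_constantCoeff_zero' (by simp)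
  have coeff_term {k : ℕ} (hk : k ≤ n) :
      coeff n (C (coeff k f) * (X * ψ) ^ k * (d⁄dX R (X * ψ) * φ ^ (n + 1)))
        = if k = n then coeff k f else 0 := by
    obtain ⟨r, rfl⟩ := Nat.exists_eq_add_of_le hk
    have cancel : φ ^ k * ψ ^ k = 1 := by rw [← mul_pow, hφψ, one_pow]
    have pull_out_X : C (coeff k f) * (X * ψ) ^ k * (d⁄dX R (X * ψ) * φ ^ (k + r + 1))
        = C (coeff k f) * (X ^ k * (d⁄dX R (X * ψ) * φ ^ (r + 1))) := by
      linear_combination C (coeff k f) * X ^ k * d⁄dX R (X * ψ) * φ ^ (r + 1) * cancel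
    rw [pull_out_X, coeff_C_mul, add_comm k r, coeff_X_pow_mul,
      coeff_derivative_X_mul_mul_pow hφψ]
    simp
  rw [subst_eq_sum_add_pow_mul hsubst f (n + 1), add_mul, map_add, sum_mul, map_sum,
    sum_congr rfl fun k hk ↦ coeff_term (mem_range_succ_iff.1 hk), mul_pow, mul_assoc, mul_assoc,
    coeff_X_pow_mul', if_neg n.not_succ_le_self]
  simp

theorem subst_eq_X_of_subst_eq_X {P y : R⟦X⟧} (hP0 : constantCoeff P = 0)
    (hP1 : IsUnit (coeff 1 P)) (hy0 : constantCoeff y = 0) (hy : P.subst y = X) :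
    y.subst P = X := by
  have left_inverse := subst_substInvOfIsUnit_left P hP0 hP1
  have hsy : HasSubst y := .of_constantCoeff_zero' hy0
  have hsP : HasSubst P := .of_constantCoeff_zero' hP0
  have eq_substInv : y = P.substInvOfIsUnit hP1 := calc
    y = subst y (subst P (P.substInvOfIsUnit hP1)) := by rw [left_inverse, subst_X hsy]
    _ = P.substInvOfIsUnit hP1 := by rw [subst_comp_subst_apply hsP hsy, hy, X_subst]
  rw [eq_substInv, left_inverse]

theorem lagrange_inversion [IsAddTorsionFree R] (hφψ : φ * ψ = 1) {y : R⟦X⟧}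
    (hy0 : constantCoeff y = 0) (hy : (X * ψ).subst y = X) (n : ℕ) :
    (n + 1) * coeff (n + 1) y = coeff n (φ ^ (n + 1)) := by
  have constantCoeff_zero : constantCoeff (X * ψ) = 0 := by simp
  have isUnit_coeff_one : IsUnit (coeff 1 (X * ψ)) := by
    rw [← zero_add 1, coeff_succ_X_mul, coeff_zero_eq_constantCoeff_apply]
    exact (IsUnit.of_mul_eq_one_right φ hφψ).map constantCoeff
  have chain_rule := congrArg (d⁄dX R)
    (subst_eq_X_of_subst_eq_X constantCoeff_zero isUnit_coeff_one hy0 hy)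
  rw [derivative_subst (.of_constantCoeff_zero' constantCoeff_zero), derivative_X] at chain_rule
  rw [← one_mul (φ ^ (n + 1)), ← chain_rule, mul_assoc, coeff_subst_mul_derivative_mul_pow hφψ,
    coeff_derivative, mul_comm]

end LagrangeInversion

section GeometricExpansion

variable {R : Type*} [CommRing R] {u : R⟦X⟧}

theorem coeff_subst_eq_sum_range (hu : constantCoeff u = 0) (f : R⟦X⟧) (n : ℕ) :
    coeff n (f.subst u) = ∑ M ∈ range (n + 1), coeff M f * coeff n (u ^ M) := by
  rw [coeff_subst' (.of_constantCoeff_zero' hu), finsum_eq_sum_of_support_subset]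
  · rfl
  refine Function.support_subset_iff'.2 fun M hM ↦ ?_
  have X_pow_dvd : X ^ M ∣ u ^ M := pow_dvd_pow_of_dvd (X_dvd_iff.2 hu) M
  rw [X_pow_dvd_iff.1 X_pow_dvd n (by simpa using hM), smul_zero]

theorem coeff_pow_succ_of_mul_one_sub_eq_one (hu : constantCoeff u = 0) {φ : R⟦X⟧}
    (hφ : φ * (1 - u) = 1) (d n : ℕ) :
    coeff n (φ ^ (d + 1)) = ∑ M ∈ range (n + 1), ((d + M).choose d : R) * coeff n (u ^ M) := by
  have hsu : HasSubst u := .of_constantCoeff_zero' hu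
  have binomial_series := congrArg (substAlgHom hsu) (mk_add_choose_mul_one_sub_pow_eq_one R d)
  rw [map_mul, map_pow, map_sub, map_one, substAlgHom_X, coe_substAlgHom] at binomial_series
  have inv_pow : (1 - u) ^ (d + 1) * φ ^ (d + 1) = 1 := by rw [← mul_pow, mul_comm, hφ, one_pow]
  rw [← left_inv_eq_right_inv binomial_series inv_pow, coeff_subst_eq_sum_range hu]
  simp only [coeff_mk]

theorem lagrange_inversion_one_sub [IsAddTorsionFree R] (hu : constantCoeff u = 0) {y : R⟦X⟧}
    (hy0 : constantCoeff y = 0) (hy : (X * (1 - u)).subst y = X) (n : ℕ) :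
    (n + 1) * coeff (n + 1) y
      = ∑ M ∈ range (n + 1), ((n + M).choose n : R) * coeff n (u ^ M) := by
  have isUnit_one_sub : IsUnit (1 - u) := isUnit_iff_constantCoeff.2 (by simp [hu])
  obtain ⟨φ, hφ⟩ := isUnit_one_sub.exists_left_inv
  rw [lagrange_inversion hφ hy0 hy, coeff_pow_succ_of_mul_one_sub_eq_one hu hφ]

theorem X_mul_one_sub_sum_subst {ι : Type*} [Fintype ι] {y : R⟦X⟧} (hy0 : constantCoeff y = 0)
    (c : ι → R) (e : ι → ℕ) :
    (X * (1 - ∑ i, C (c i) * X ^ e i)).subst y = y - ∑ i, C (c i) * y ^ (e i + 1) := by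
  have hsy : HasSubst y := .of_constantCoeff_zero' hy0
  have subst_const (a : R) : substAlgHom hsy (C a) = C a := by
    rw [coe_substAlgHom, subst_C]
    rfl
  rw [← coe_substAlgHom hsy]
  simp only [map_mul, map_sub, map_sum, map_pow, substAlgHom_X, subst_const, mul_sub,
    mul_one, mul_sum, pow_succ', mul_left_comm]

end GeometricExpansion

section SparseEquation

variable {R ι : Type*} [CommRing R] [Fintype ι] [DecidableEq ι]

theorem coeff_sum_C_mul_X_pow_pow (c : ι → R) (e : ι → ℕ) (M n : ℕ) :
    coeff n ((∑ i, C (c i) * X ^ e i) ^ M)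
      = ∑ k ∈ piAntidiag univ M with ∑ i, e i * k i = n,
          (Nat.multinomial univ k : R) * ∏ i, c i ^ k i := by
  rw [sum_pow_eq_sum_piAntidiag, map_sum, sum_filter]
  refine sum_congr rfl fun k _ ↦ ?_
  have monomial_form : (Nat.multinomial univ k : R⟦X⟧) * ∏ i, (C (c i) * X ^ e i) ^ k i
      = C ((Nat.multinomial univ k : R) * ∏ i, c i ^ k i) * X ^ ∑ i, e i * k i := by
    simp only [mul_pow, prod_mul_distrib, ← pow_mul, prod_pow_eq_pow_sum, map_mul, map_natCast,
      map_prod, map_pow, mul_assoc]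
  rw [monomial_form, coeff_C_mul, coeff_X_pow, mul_ite, mul_one, mul_zero]
  simp only [eq_comm]

/-- The solutions `k : ι → ℕ` of `∑ i, e i * k i = n`, that is, the partitions of `n` into parts
`e i` listed by multiplicity. Positive weights `e i` force `k i ≤ n`, so the box loses none. -/
def weightedAntidiag (e : ι → ℕ) (n : ℕ) : Finset (ι → ℕ) :=
  {k ∈ Fintype.piFinset fun _ ↦ range (n + 1) | ∑ i, e i * k i = n}

theorem mem_weightedAntidiag {e : ι → ℕ} (he : ∀ i, e i ≠ 0) {n : ℕ} {k : ι → ℕ} :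
    k ∈ weightedAntidiag e n ↔ ∑ i, e i * k i = n := by
  simp only [weightedAntidiag, mem_filter, Fintype.mem_piFinset, mem_range_succ_iff,
    and_iff_right_iff_imp]
  rintro rfl i
  calc k i ≤ e i * k i := Nat.le_mul_of_pos_left _ (he i).bot_lt
    _ ≤ ∑ i, e i * k i :=
      single_le_sum (f := fun i ↦ e i * k i) (fun _ _ ↦ Nat.zero_le _) (mem_univ i)

theorem sum_weightedAntidiag_eq_sum_piAntidiag {N : Type*} [AddCommMonoid N] {e : ι → ℕ}
    (he : ∀ i, e i ≠ 0) (n : ℕ) (F : (ι → ℕ) → N) :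
    ∑ k ∈ weightedAntidiag e n, F k
      = ∑ M ∈ range (n + 1), ∑ k ∈ piAntidiag univ M with ∑ i, e i * k i = n, F k := by
  rw [← sum_fiberwise_of_maps_to (g := fun k : ι → ℕ ↦ ∑ i, k i) (t := range (n + 1))]
  · refine sum_congr rfl fun M _ ↦ sum_congr ?_ fun _ _ ↦ rfl
    ext k
    simp [mem_weightedAntidiag he, and_comm]
  · intro k hk
    rw [mem_range_succ_iff, ← (mem_weightedAntidiag he).1 hk]
    exact sum_le_sum fun i _ ↦ Nat.le_mul_of_pos_left _ (he i).bot_lt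

theorem coeff_succ_of_sub_sum_eq_X [IsAddTorsionFree R] {y : R⟦X⟧}
    (hy0 : constantCoeff y = 0) (c : ι → R) {e : ι → ℕ} (he : ∀ i, e i ≠ 0)
    (hy : y - ∑ i, C (c i) * y ^ (e i + 1) = X) (n : ℕ) :
    (n + 1) * coeff (n + 1) y
      = ∑ k ∈ weightedAntidiag e n,
          ((n + ∑ i, k i).choose n * Nat.multinomial univ k : R) * ∏ i, c i ^ k i := by
  have hu0 : constantCoeff (∑ i, C (c i) * X ^ e i) = 0 := by simp [he]
  rw [lagrange_inversion_one_sub hu0 hy0 (by rw [X_mul_one_sub_sum_subst hy0, hy]),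
    sum_weightedAntidiag_eq_sum_piAntidiag he]
  refine sum_congr rfl fun M _ ↦ ?_
  rw [coeff_sum_C_mul_X_pow_pow, mul_sum]
  refine sum_congr rfl fun k hk ↦ ?_
  rw [(mem_piAntidiag.1 (mem_filter.1 hk).1).1, mul_assoc]

end SparseEquation

section ThreeTerms

theorem sum_weightedAntidiag_three {N : Type*} [AddCommMonoid N] {e b c : ℕ} (he : e ≠ 0)
    (hb : b ≠ 0) (hc : c ≠ 0) (m : ℕ) (F : (Fin 3 → ℕ) → N) :
    ∑ k ∈ weightedAntidiag ![e, e * b, e * c] (e * m), F k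
      = ∑ j ∈ range (m / c + 1), ∑ i ∈ range ((m - c * j) / b + 1),
          F ![m - b * i - c * j, i, j] := by
  have weights_ne_zero : ∀ i, ![e, e * b, e * c] i ≠ 0 := by simp [Fin.forall_fin_succ, *]
  have mem_iff (k : Fin 3 → ℕ) :
      k ∈ weightedAntidiag ![e, e * b, e * c] (e * m) ↔ k 0 + b * k 1 + c * k 2 = m := by
    rw [mem_weightedAntidiag weights_ne_zero, ← Nat.mul_right_inj he (b := _ + _)]
    simp [Fin.sum_univ_three, mul_add, mul_assoc]
  have mem_range_iff (j i : ℕ) :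
      j ∈ range (m / c + 1) ∧ i ∈ range ((m - c * j) / b + 1) ↔ b * i + c * j ≤ m := by
    rw [mem_range_succ_iff, mem_range_succ_iff, Nat.le_div_iff_mul_le hb.bot_lt,
      Nat.le_div_iff_mul_le hc.bot_lt, mul_comm i, mul_comm j]
    lia
  have vec_eq (k : Fin 3 → ℕ) (hk : k ∈ weightedAntidiag ![e, e * b, e * c] (e * m)) :
      ![m - b * k 1 - c * k 2, k 1, k 2] = k := by
    have first_eq : m - b * k 1 - c * k 2 = k 0 := by
      rw [mem_iff] at hk
      lia
    rw [first_eq]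
    exact FinVec.etaExpand_eq k
  rw [sum_sigma']
  refine sum_bij' (fun k _ ↦ ⟨k 2, k 1⟩) (fun x _ ↦ ![m - b * x.2 - c * x.1, x.2, x.1])
    ?_ ?_ vec_eq (fun _ _ ↦ rfl) (fun k hk ↦ congrArg F (vec_eq k hk).symm)
  · intro k hk
    rw [mem_iff] at hk
    rw [mem_sigma, mem_range_iff]
    lia
  · intro x hx
    rw [mem_sigma, mem_range_iff] at hx
    rw [mem_iff]
    change m - b * x.2 - c * x.1 + b * x.2 + c * x.1 = m
    lia

variable {K : Type*} [Field K] [CharZero K]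

theorem cast_choose_mul_multinomial {ι : Type*} [Fintype ι] (n : ℕ) (k : ι → ℕ) :
    ((n + ∑ i, k i).choose n * Nat.multinomial univ k : K)
      = (n + ∑ i, k i).factorial / (n.factorial * ∏ i, ((k i).factorial : K)) := by
  have multinomial_ne_zero : (Nat.multinomial univ k : K) ≠ 0 :=
    Nat.cast_ne_zero.2 (Nat.multinomial_pos univ k).ne'
  rw [Nat.cast_add_choose, ← Nat.multinomial_spec]
  push_cast
  field_simp

theorem coeff_of_sub_three_terms_eq_X {y : K⟦X⟧} (hy0 : constantCoeff y = 0) (α β γ : K)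
    {e b c : ℕ} (he : e ≠ 0) (hb : b ≠ 0) (hc : c ≠ 0)
    (hy : y - (C α * y ^ (e + 1) + C β * y ^ (e * b + 1) + C γ * y ^ (e * c + 1)) = X) (m : ℕ) :
    coeff (e * m + 1) y
      = 1 / ((e * m + 1 : ℕ) : K) *
        ∑ j ∈ range (m / c + 1), ∑ i ∈ range ((m - c * j) / b + 1),
          ((e * m + (m - b * i - c * j + i + j)).factorial : K) /
              ((e * m).factorial * (m - b * i - c * j).factorial * i.factorial * j.factorial) *
            (α ^ (m - b * i - c * j) * β ^ i * γ ^ j) := by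
  have weights_ne_zero : ∀ i, ![e, e * b, e * c] i ≠ 0 := by simp [Fin.forall_fin_succ, *]
  have expansion := coeff_succ_of_sub_sum_eq_X hy0 ![α, β, γ] weights_ne_zero
    (by simpa [Fin.sum_univ_three] using hy) (e * m)
  simp only [cast_choose_mul_multinomial] at expansion
  rw [sum_weightedAntidiag_three he hb hc] at expansion
  rw [one_div, eq_inv_mul_iff_mul_eq₀ (Nat.cast_ne_zero.2 (e * m).succ_ne_zero), Nat.cast_succ,
    expansion]
  simp [Fin.sum_univ_three, Fin.prod_univ_three, mul_assoc]

theorem sum_choose_three_eq_sub_three_terms {R : Type*} [CommRing R] (y : R⟦X⟧) (q : ℕ) :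
    ∑ k ∈ range (3 + 1), (-1 : R⟦X⟧) ^ k * (Nat.choose 3 k : R⟦X⟧) * y ^ (q + 1) ^ k
      = y - (C 3 * y ^ (q + 1) + C (-3) * y ^ (q * (q + 1 + 1) + 1)
          + C 1 * y ^ (q * ((q + 1) ^ 2 + (q + 1) + 1) + 1)) := by
  have exponent_two : q * (q + 1 + 1) + 1 = (q + 1) ^ 2 := by ring
  have exponent_three : q * ((q + 1) ^ 2 + (q + 1) + 1) + 1 = (q + 1) ^ 3 := by ring
  have map_three : (C 3 : R⟦X⟧) = 3 := map_ofNat C 3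
  rw [exponent_two, exponent_three, map_neg, map_three, map_one]
  simp only [sum_range_succ, range_zero, sum_empty, Nat.choose]
  push_cast
  ring

theorem succ_mul_sub_sub_eq {q m a i j : ℕ}
    (hm : m = a + (q + 1 + 1) * i + ((q + 1) ^ 2 + (q + 1) + 1) * j) :
    (q + 1) * (m - i - (q + 1 + 1) * j) = q * m + (a + i + j) := by
  have difference_eq : m - i - (q + 1 + 1) * j = a + (q + 1) * i + (q + 1) ^ 2 * j := by
    rw [Nat.sub_sub, hm]
    exact Nat.sub_eq_of_eq_add (by ring)
  rw [difference_eq, hm]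
  ring

end ThreeTerms

theorem statement_5_general {K : Type*} [Field K] [CharZero K] {p : ℕ} (hp : 2 ≤ p)
    (y : PowerSeries K)
    (h0 : PowerSeries.constantCoeff y = 0)
    (heq : ∑ k ∈ Finset.range (3 + 1),
        (-1 : PowerSeries K) ^ k * (Nat.choose 3 k : PowerSeries K) * y ^ p ^ k
        = PowerSeries.X)
    (n m : ℕ) (hn : n = (p - 1) * m + 1) :
    PowerSeries.coeff n y =
      (1 / (n : K)) *
        ∑ j ∈ Finset.range (m / (p ^ 2 + p + 1) + 1),
          ∑ i ∈ Finset.range ((m - (p ^ 2 + p + 1) * j) / (p + 1) + 1),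
            ((Nat.factorial (p * (m - i - (p + 1) * j)) : K) /
                ((Nat.factorial (n - 1) : K) *
                  (Nat.factorial (m - (p + 1) * i - (p ^ 2 + p + 1) * j) : K) *
                  (Nat.factorial i : K) * (Nat.factorial j : K))) *
              (-1 : K) ^ i * (3 : K) ^ (m - p * i - (p ^ 2 + p + 1) * j) := by
  obtain ⟨q, rfl⟩ : ∃ q, p = q + 1 := ⟨p - 1, by lia⟩
  subst hn
  have hq : q ≠ 0 := by lia
  rw [sum_choose_three_eq_sub_three_terms] at heq
  rw [Nat.add_sub_cancel,
    coeff_of_sub_three_terms_eq_X h0 3 (-3) 1 hq (Nat.succ_ne_zero _) (Nat.succ_ne_zero _) heq]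
  refine congrArg _ (sum_congr rfl fun j hj ↦ sum_congr rfl fun i hi ↦ ?_)
  simp only [mem_range, Order.lt_add_one_iff, Nat.le_div_iff_mul_le (Nat.succ_pos _)] at hi hj
  obtain ⟨a, ha⟩ : ∃ a, m = a + (q + 1 + 1) * i + ((q + 1) ^ 2 + (q + 1) + 1) * j :=
    ⟨m - (q + 1 + 1) * i - ((q + 1) ^ 2 + (q + 1) + 1) * j, by lia⟩
  have first_multiplicity : m - (q + 1 + 1) * i - ((q + 1) ^ 2 + (q + 1) + 1) * j = a := by lia
  have exponent_of_three : m - (q + 1) * i - ((q + 1) ^ 2 + (q + 1) + 1) * j = a + i := by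
    rw [Nat.sub_sub, ha]
    exact Nat.sub_eq_of_eq_add (by ring)
  rw [Nat.add_sub_cancel, first_multiplicity, exponent_of_three, succ_mul_sub_sub_eq ha,
    neg_pow (3 : K), one_pow, pow_add]
  ring

/-- For all odd `n ≥ 1`, writing `m = (n-1)/2`,
`C_{3,3}(n) = (1/n) ⬝ ∑_{j=0}^{⌊m/13⌋} ∑_{i=0}^{⌊(m-13j)/4⌋}
  multinomial(3(m - i - 4j); n-1, m - 4i - 13j, i, j) (-1)^i 3^{m - 3i - 13j}`,
where `C_{3,3}(n)` is the coefficient of `x^n` in the unique power series `y` with zero constant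
term satisfying `∑_{k=0}^{3} (-1)^k C(3,k) y^{3^k} = x`, and
`multinomial(M; a,b,c,e) = M!/(a! b! c! e!)` for `M = a + b + c + e`. -/
theorem statement_5
    (y : PowerSeries ℚ)
    (h0 : PowerSeries.constantCoeff y = 0)
    (heq : ∑ k ∈ Finset.range (3 + 1),
        (-1 : PowerSeries ℚ) ^ k * (Nat.choose 3 k : PowerSeries ℚ) * y ^ 3 ^ k
        = PowerSeries.X)
    (n : ℕ) (hn : 1 ≤ n) (hodd : Odd n) (m : ℕ) (hm : m = (n - 1) / 2) :
    PowerSeries.coeff n y =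
      (1 / (n : ℚ)) *
        ∑ j ∈ Finset.range (m / 13 + 1),
          ∑ i ∈ Finset.range ((m - 13 * j) / 4 + 1),
            ((Nat.factorial (3 * (m - i - 4 * j)) : ℚ) /
                ((Nat.factorial (n - 1) : ℚ) * (Nat.factorial (m - 4 * i - 13 * j) : ℚ) *
                  (Nat.factorial i : ℚ) * (Nat.factorial j : ℚ))) *
              (-1 : ℚ) ^ i * (3 : ℚ) ^ (m - 3 * i - 13 * j) := by
  exact statement_5_general (p := 3) (by lia) y h0 heq n m (by grind)
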